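/- arXiv:2407.13491 — 6 statements merged into one kernel-verified Lean document; each statement's English description precedes it below -/
import Mathlib

section
/- Let g_B, g_E, σ² > 0 and ρ ∈ (0,1] with g_B − g_E·ρ² > 0. Then the function P_B ↦ log₂(1 + P_B·(g_B − g_E·ρ²)/(P_B·g_E·ρ² + σ²)) is strictly monotonically increasing on [0, ∞). Consequently, without artificial noise and under the secure condition, the achievable secrecy rate increases monotonically with the power allocated to the legitimate user. -/
/-- Without artificial noise, under the secure condition `g_B - g_E ρ² > 0`,
the secrecy rate is strictly increasing in the power `P_B` on `[0, ∞)`. -/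
theorem stmt_1 (gB gE σ2 ρ : ℝ)
    (hgB : 0 < gB) (hgE : 0 < gE) (hσ : 0 < σ2)
    (hρ0 : 0 < ρ) (hρ1 : ρ ≤ 1) (hsec : 0 < gB - gE * ρ ^ 2) :
    StrictMonoOn
      (fun PB : ℝ =>
        Real.logb 2 (1 + PB * (gB - gE * ρ ^ 2) / (PB * gE * ρ ^ 2 + σ2)))
      (Set.Ici 0) := by
  intro x hx y hy hxy
  have hx0 : (0 : ℝ) ≤ x := hx
  have hy0 : (0 : ℝ) ≤ y := hy
  have hdx : 0 < x * gE * ρ ^ 2 + σ2 := by positivity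
  have hdy : 0 < y * gE * ρ ^ 2 + σ2 := by positivity
  have hnn : 0 ≤ x * (gB - gE * ρ ^ 2) / (x * gE * ρ ^ 2 + σ2) :=
    div_nonneg (mul_nonneg hx0 hsec.le) hdx.le
  have key : x * (gB - gE * ρ ^ 2) / (x * gE * ρ ^ 2 + σ2)
      < y * (gB - gE * ρ ^ 2) / (y * gE * ρ ^ 2 + σ2) := by
    rw [div_lt_div_iff₀ hdx hdy]
    have h := mul_pos (mul_pos hsec hσ) (sub_pos.mpr hxy)
    linarith
  exact Real.logb_lt_logb (by norm_num) (by linarith) (by linarith)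
end

section
/- Let P > 0, g_B, g_E, σ² > 0, and ρ ∈ (0,1). Suppose g_B − g_E·ρ² < 0 and g_B − g_E·ρ² ≥ −P·g_B·g_E·(1 − ρ⁴)/σ². Define P_{E,min} = (g_E·ρ² − g_B)·σ²/(g_B·g_E·(1 − ρ⁴)). Then 0 < P_{E,min} ≤ P, and for every P_E with P_{E,min} ≤ P_E ≤ P and P_B = P − P_E, the secrecy rate R = log₂(1 + P_B·g_B/(P_E·g_B·ρ² + σ²)) − log₂(1 + P_B·g_E·ρ²/(P_E·g_E + σ²)) is nonnegative. (Security is regained by allocating at least P_{E,min} power to artificial noise.) -/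
/-- Regaining security with artificial noise: if `g_B - g_E ρ² < 0` but
`g_B - g_E ρ² ≥ -P g_B g_E (1-ρ⁴)/σ²`, then `0 < P_{E,min} ≤ P` and for every
AN power `P_E ∈ [P_{E,min}, P]` (with `P_B = P - P_E`) the secrecy rate is
nonnegative. -/
theorem stmt_5 (P gB gE σ2 ρ : ℝ)
    (hP : 0 < P) (hgB : 0 < gB) (hgE : 0 < gE) (hσ : 0 < σ2)
    (hρ0 : 0 < ρ) (hρ1 : ρ < 1)
    (hins : gB - gE * ρ ^ 2 < 0)
    (hcond : gB - gE * ρ ^ 2 ≥ -(P * gB * gE * (1 - ρ ^ 4)) / σ2)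
    (PEmin : ℝ)
    (hmin : PEmin = (gE * ρ ^ 2 - gB) * σ2 / (gB * gE * (1 - ρ ^ 4))) :
    (0 < PEmin ∧ PEmin ≤ P) ∧
    ∀ PE : ℝ, PEmin ≤ PE → PE ≤ P →
      0 ≤ Real.logb 2 (1 + (P - PE) * gB / (PE * gB * ρ ^ 2 + σ2))
          - Real.logb 2 (1 + (P - PE) * gE * ρ ^ 2 / (PE * gE + σ2)) := by
  have h4 : 0 < 1 - ρ ^ 4 := by
    have := pow_lt_one₀ hρ0.le hρ1 (n := 4) (by norm_num)
    linarith
  have hD : 0 < gB * gE * (1 - ρ ^ 4) := by positivity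
  have hpos : 0 < PEmin := by
    rw [hmin]
    exact div_pos (mul_pos (by linarith) hσ) hD
  refine ⟨⟨hpos, ?_⟩, ?_⟩
  · rw [hmin, div_le_iff₀ hD]
    rw [ge_iff_le, div_le_iff₀ hσ] at hcond
    nlinarith
  · intro PE h1 h2
    have hPE : 0 < PE := lt_of_lt_of_le hpos h1
    have hPB : 0 ≤ P - PE := by linarith
    rw [hmin, div_le_iff₀ hD] at h1
    have hd1 : 0 < PE * gB * ρ ^ 2 + σ2 := by positivity
    have hd2 : 0 < PE * gE + σ2 := by positivity
    rw [sub_nonneg]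
    apply Real.logb_le_logb_of_le (by norm_num)
    · positivity
    · have key : gE * ρ ^ 2 * (PE * gB * ρ ^ 2 + σ2) ≤ gB * (PE * gE + σ2) := by
        nlinarith
      have := mul_le_mul_of_nonneg_left key hPB
      have h3 : (P - PE) * gE * ρ ^ 2 / (PE * gE + σ2)
          ≤ (P - PE) * gB / (PE * gB * ρ ^ 2 + σ2) := by
        rw [div_le_div_iff₀ hd2 hd1]
        linarith
      linarith
end

section
/- Let P > 0, g_B, g_E, σ² > 0, and ρ ∈ (0,1). Define Υ₃ = P²·g_B·g_E·(g_E − g_B·ρ²)·ρ²·σ² + P·(g_E² − g_B²)·ρ²·σ⁴ + (g_E·ρ² − g_B)·σ⁶ and assume Υ₃ ≤ 0. Then the secrecy rate F(P_E) = log₂(1 + (P − P_E)·g_B/(P_E·g_B·ρ² + σ²)) − log₂(1 + (P − P_E)·g_E·ρ²/(P_E·g_E + σ²)) is monotonically decreasing on [0, P]; hence its maximum over [0, P] is achieved at P_E = 0 (no power allocated to artificial noise). -/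
/-- When `Υ₃ ≤ 0`, the secrecy rate is monotonically decreasing in the
artificial-noise power on `[0, P]`, so its maximum is achieved at `P_E = 0`. -/
theorem stmt_12 (P gB gE σ2 ρ : ℝ)
    (hP : 0 < P) (hgB : 0 < gB) (hgE : 0 < gE) (hσ : 0 < σ2)
    (hρ0 : 0 < ρ) (hρ1 : ρ < 1)
    (Y3 : ℝ)
    (hY3 : Y3 = P ^ 2 * gB * gE * (gE - gB * ρ ^ 2) * ρ ^ 2 * σ2
      + P * (gE ^ 2 - gB ^ 2) * ρ ^ 2 * σ2 ^ 2
      + (gE * ρ ^ 2 - gB) * σ2 ^ 3)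
    (hY3neg : Y3 ≤ 0)
    (F : ℝ → ℝ)
    (hF : ∀ PE : ℝ, F PE =
      Real.logb 2 (1 + (P - PE) * gB / (PE * gB * ρ ^ 2 + σ2))
        - Real.logb 2 (1 + (P - PE) * gE * ρ ^ 2 / (PE * gE + σ2))) :
    AntitoneOn F (Set.Icc 0 P) ∧
    ∀ PE ∈ Set.Icc (0 : ℝ) P, F PE ≤ F 0 := by
  have key : AntitoneOn F (Set.Icc 0 P) := by
    intro x hx y hy hxy
    obtain ⟨hx0, hxP⟩ := hx
    obtain ⟨hy0, hyP⟩ := hy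
    have hr0 : 0 < ρ ^ 2 := by positivity
    have hr1 : ρ ^ 2 < 1 := by nlinarith
    subst hY3
    rw [hF, hF]
    generalize ρ ^ 2 = r at *
    have hd1 : ∀ z, 0 ≤ z → 0 < z * gB * r + σ2 := fun z hz => by positivity
    have hd2 : ∀ z, 0 ≤ z → 0 < z * gE + σ2 := fun z hz => by positivity
    have hn1 : ∀ z, 0 ≤ z → z ≤ P → 0 < 1 + (P - z) * gB / (z * gB * r + σ2) := by
      intro z hz hzP
      have := hd1 z hz
      have : 0 ≤ P - z := by linarith
      positivity
    have hn2 : ∀ z, 0 ≤ z → z ≤ P → 0 < 1 + (P - z) * gE * r / (z * gE + σ2) := by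
      intro z hz hzP
      have := hd2 z hz
      have : 0 ≤ P - z := by linarith
      positivity
    rw [← Real.logb_div (hn1 x hx0 hxP).ne' (hn2 x hx0 hxP).ne',
      ← Real.logb_div (hn1 y hy0 hyP).ne' (hn2 y hy0 hyP).ne']
    apply Real.logb_le_logb_of_le (by norm_num) (div_pos (hn1 y hy0 hyP) (hn2 y hy0 hyP))
    have e : ∀ z, 0 ≤ z → z ≤ P →
        (1 + (P - z) * gB / (z * gB * r + σ2)) / (1 + (P - z) * gE * r / (z * gE + σ2))
        = ((σ2 + P * gB - z * gB * (1 - r)) * (σ2 + z * gE)) /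
          ((σ2 + z * gB * r) * (σ2 + P * gE * r + z * gE * (1 - r))) := by
      intro z hz hzP
      have h1 := hd1 z hz
      have h2 := hd2 z hz
      have h3 : 0 < σ2 + P * gE * r + z * gE * (1 - r) := by
        have : 0 < 1 - r := by linarith
        positivity
      have a1 : 1 + (P - z) * gB / (z * gB * r + σ2)
          = (σ2 + P * gB - z * gB * (1 - r)) / (σ2 + z * gB * r) := by
        rw [add_comm σ2 (z * gB * r), eq_div_iff h1.ne', add_mul, div_mul_cancel₀ _ h1.ne']
        ring
      have a2 : 1 + (P - z) * gE * r / (z * gE + σ2)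
          = (σ2 + P * gE * r + z * gE * (1 - r)) / (σ2 + z * gE) := by
        rw [add_comm σ2 (z * gE), eq_div_iff h2.ne', add_mul, div_mul_cancel₀ _ h2.ne']
        ring
      rw [a1, a2, div_div_div_eq]
    rw [e x hx0 hxP, e y hy0 hyP]
    have hr : 0 < 1 - r := by linarith
    rw [div_le_div_iff₀ (by positivity) (by positivity), ← sub_nonneg]
    have h1 : 0 ≤ gE * gB * (1 - r) * σ2 * ((1 + r) * σ2 + r * P * gB + r * P * gE) * (x + y) := by
      positivity
    have h2 : 0 ≤ gE * gB * (1 - r) * (r * r * gB * (σ2 + P * gE) + gE * (σ2 + r * P * gB))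
        * (x * y) := by
      positivity
    have h3 := mul_nonneg (sub_nonneg.2 hxy) (add_nonneg (add_nonneg h1 h2) (neg_nonneg.2 hY3neg))
    refine h3.trans_eq ?_
    ring
  exact ⟨key, fun PE h => key ⟨le_rfl, hP.le⟩ h h.1⟩
end

section
/- Let P_B > 0, P_E ≥ 0, and g_B, g_E, σ² > 0. Then the secrecy rate ρ ↦ log₂(1 + P_B·g_B/(P_E·g_B·ρ² + σ²)) − log₂(1 + P_B·g_E·ρ²/(P_E·g_E + σ²)) is strictly monotonically decreasing in the correlation ρ on (0, 1]. -/
/-- The secrecy rate is strictly monotonically decreasing in the correlation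
`ρ` on `(0, 1]`. -/
theorem stmt_13 (PB PE gB gE σ2 : ℝ)
    (hPB : 0 < PB) (hPE : 0 ≤ PE)
    (hgB : 0 < gB) (hgE : 0 < gE) (hσ : 0 < σ2) :
    StrictAntiOn
      (fun ρ : ℝ =>
        Real.logb 2 (1 + PB * gB / (PE * gB * ρ ^ 2 + σ2))
          - Real.logb 2 (1 + PB * gE * ρ ^ 2 / (PE * gE + σ2)))
      (Set.Ioc 0 1) := by
  intro a ha b hb hab
  have ha0 : 0 < a := ha.1
  have hsq : a ^ 2 < b ^ 2 := by gcongr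
  have h1 : Real.logb 2 (1 + PB * gB / (PE * gB * b ^ 2 + σ2))
      ≤ Real.logb 2 (1 + PB * gB / (PE * gB * a ^ 2 + σ2)) := by
    apply Real.logb_le_logb_of_le (by norm_num) (by positivity)
    gcongr
  have h2 : Real.logb 2 (1 + PB * gE * a ^ 2 / (PE * gE + σ2))
      < Real.logb 2 (1 + PB * gE * b ^ 2 / (PE * gE + σ2)) := by
    apply Real.logb_lt_logb (by norm_num) (by positivity)
    gcongr
  show _ - _ < _ - _
  linarith
end

section
/- Let N be a positive integer, λ > 0, β > 0, θ ∈ (−1, 1), and set d = λ/2, r_BD = N²·d²·(1 − θ²)/(2·λ·β²), r_Ray = 2·(N·d)²/λ, and r_DT = N²·λ·(1 − θ²)/(8·β² + 2·(1 − θ²)). Then 0 < r_DT < r_BD and r_DT·r_BD/(r_BD − r_DT) = r_Ray; i.e., r_DT is exactly the distance whose right beam-depth boundary equals the Rayleigh distance. -/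
/-- The distance threshold `r_DT` is exactly the distance whose right
beam-depth boundary equals the Rayleigh distance. -/
theorem stmt_15 (N : ℕ) (hN : 0 < N) (lam β θ : ℝ)
    (hlam : 0 < lam) (hβ : 0 < β) (hθ : -1 < θ ∧ θ < 1)
    (d rBD rRay rDT : ℝ)
    (hd : d = lam / 2)
    (hBD : rBD = (N : ℝ) ^ 2 * d ^ 2 * (1 - θ ^ 2) / (2 * lam * β ^ 2))
    (hRay : rRay = 2 * ((N : ℝ) * d) ^ 2 / lam)
    (hDT : rDT = (N : ℝ) ^ 2 * lam * (1 - θ ^ 2) / (8 * β ^ 2 + 2 * (1 - θ ^ 2))) :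
    (0 < rDT ∧ rDT < rBD) ∧ rDT * rBD / (rBD - rDT) = rRay := by
  have hs : 0 < 1 - θ ^ 2 := by nlinarith [hθ.1, hθ.2]
  have hNr : (0 : ℝ) < N := by exact_mod_cast hN
  generalize 1 - θ ^ 2 = s at *
  have hA : 0 < (N : ℝ) ^ 2 * lam := by positivity
  have hb : 0 < β ^ 2 := by positivity
  have hBD2 : rBD = (N : ℝ) ^ 2 * lam * s / (8 * β ^ 2) := by
    rw [hBD, hd]; field_simp; norm_num
  have hRay2 : rRay = (N : ℝ) ^ 2 * lam / 2 := by
    rw [hRay, hd]; field_simp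
  generalize (N : ℝ) ^ 2 * lam = A at hA hBD2 hRay2 hDT
  generalize β ^ 2 = b at hb hBD2 hDT
  have hdiff : rBD - rDT = A * s * (2 * s) / (8 * b * (8 * b + 2 * s)) := by
    rw [hBD2, hDT]; field_simp; ring
  have hpos : 0 < rBD - rDT := by rw [hdiff]; positivity
  refine ⟨⟨by rw [hDT]; positivity, by linarith⟩, ?_⟩
  rw [div_eq_iff hpos.ne', hdiff, hBD2, hRay2, hDT]
  field_simp
end

section
/- Let N be a positive integer, λ > 0, and β > 0. Define r_DT(θ) = N²·λ·(1 − θ²)/(8·β² + 2·(1 − θ²)) for θ ∈ [−1, 1]. Then for all θ ∈ [−1, 1], r_DT(θ) ≤ r_DT(0) = N²·λ/(8·β² + 2), with equality if and only if θ = 0; i.e., the distance threshold attains its maximum at spatial angle zero. -/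
/-- The distance threshold `r_DT(θ)` attains its maximum
`N²λ/(8β² + 2)` exactly at spatial angle `θ = 0`. -/
theorem stmt_16 (N : ℕ) (hN : 0 < N) (lam β : ℝ)
    (hlam : 0 < lam) (hβ : 0 < β)
    (rDT : ℝ → ℝ)
    (hDT : ∀ θ : ℝ, rDT θ =
      (N : ℝ) ^ 2 * lam * (1 - θ ^ 2) / (8 * β ^ 2 + 2 * (1 - θ ^ 2))) :
    (∀ θ ∈ Set.Icc (-1 : ℝ) 1, rDT θ ≤ rDT 0) ∧
    rDT 0 = (N : ℝ) ^ 2 * lam / (8 * β ^ 2 + 2) ∧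
    (∀ θ ∈ Set.Icc (-1 : ℝ) 1, (rDT θ = rDT 0 ↔ θ = 0)) := by
  have hC : 0 < (N : ℝ) ^ 2 * lam := by positivity
  have h0 : rDT 0 = (N : ℝ) ^ 2 * lam / (8 * β ^ 2 + 2) := by
    rw [hDT]; norm_num
  have hb : 0 < β ^ 2 := by positivity
  have hD : ∀ θ ∈ Set.Icc (-1 : ℝ) 1, 0 < 8 * β ^ 2 + 2 * (1 - θ ^ 2) := by
    rintro θ ⟨h1, h2⟩
    nlinarith
  have key : ∀ θ ∈ Set.Icc (-1 : ℝ) 1, rDT 0 - rDT θ =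
      (N : ℝ) ^ 2 * lam * (8 * β ^ 2) * θ ^ 2 /
        ((8 * β ^ 2 + 2) * (8 * β ^ 2 + 2 * (1 - θ ^ 2))) := by
    intro θ hθ
    have h1 := (hD θ hθ).ne'
    have h2 : 8 * β ^ 2 + 2 ≠ 0 := by positivity
    rw [h0, hDT, div_sub_div _ _ h2 h1]
    congr 1
    ring
  refine ⟨fun θ hθ => ?_, h0, fun θ hθ => ⟨fun h => ?_, fun h => by rw [h]⟩⟩
  · have h1 := hD θ hθ
    rw [← sub_nonneg, key θ hθ]
    positivity
  · by_contra hne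
    have h1 := hD θ hθ
    have h2 : 0 < rDT 0 - rDT θ := by
      rw [key θ hθ]
      positivity
    linarith
end
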